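/- arXiv:alg-geom/9503019 — 5 statements merged into one kernel-verified Lean document; each statement's English description precedes it below -/
import Mathlib

section
/- Let Γ be a stable graph with at most m whole edges, let Δ₁ and Δ₂ be full subgraphs of Γ, and let Δ be the full subgraph on the vertex set V(Δ₁) ∪ V(Δ₂). Then g(Δ) ≤ g(Δ₁) + g(Δ₂) + m. -/
/-- A stable (weighted) graph: a finite nonempty vertex set `V` with weights `w`,
a finite set `H` of half edges with attachment map `a` and an involution `ι`.
Fixed points of `ι` are the loose half edges; 2-element orbits are the whole edges.
The graph is connected with respect to its whole edges and satisfies the stability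
condition. -/
structure StableGraph where
  V : Type
  [instFintypeV : Fintype V]
  [instDecEqV : DecidableEq V]
  w : V → ℕ
  H : Type
  [instFintypeH : Fintype H]
  [instDecEqH : DecidableEq H]
  a : H → V
  ι : H → H
  invol : ∀ x, ι (ι x) = x
  conn : (SimpleGraph.fromRel fun u v : V =>
    ∃ x, ι x ≠ x ∧ a x = u ∧ a (ι x) = v).Connected
  stable_zero : ∀ v, w v = 0 → 3 ≤ (Finset.univ.filter fun x => a x = v).card
  stable_one : ∀ v, w v = 1 → 1 ≤ (Finset.univ.filter fun x => a x = v).card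

attribute [instance] StableGraph.instFintypeV StableGraph.instDecEqV
  StableGraph.instFintypeH StableGraph.instDecEqH

namespace StableGraph

variable (Γ : StableGraph)

/-- The number of loose half edges (marked points). -/
def looseCount : ℕ := (Finset.univ.filter fun x : Γ.H => Γ.ι x = x).card

/-- The half edges of whole edges of the full subgraph on the vertex set `S`,
i.e. the half edges `x` of whole edges both of whose endpoints lie in `S`. -/
def edgeFinset (S : Finset Γ.V) : Finset Γ.H :=
  Finset.univ.filter fun x : Γ.H => Γ.ι x ≠ x ∧ Γ.a x ∈ S ∧ Γ.a (Γ.ι x) ∈ S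

/-- The number of whole edges of the full subgraph on `S`. -/
def edgeCount (S : Finset Γ.V) : ℕ := (Γ.edgeFinset S).card / 2

/-- The simple graph underlying the full subgraph on `S` (loops and multiple
edges collapsed; this suffices for connectivity notions). -/
def subGraphOn (S : Finset Γ.V) : SimpleGraph {v : Γ.V // v ∈ S} :=
  SimpleGraph.fromRel fun u v => ∃ x, Γ.ι x ≠ x ∧ Γ.a x = u.1 ∧ Γ.a (Γ.ι x) = v.1

/-- The number of connected components of the full subgraph on `S`. -/
noncomputable def numComponents (S : Finset Γ.V) : ℕ :=
  Nat.card (Γ.subGraphOn S).ConnectedComponent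

/-- The genus of the full subgraph on `S`: its first Betti number
(#whole edges − #vertices + #components) plus the sum of the weights. -/
noncomputable def subGenus (S : Finset Γ.V) : ℤ :=
  (Γ.edgeCount S : ℤ) - S.card + Γ.numComponents S + ∑ v ∈ S, (Γ.w v : ℤ)

/-- The genus of a stable graph: `b₁ + Σ w` with
`b₁ = #whole edges − #vertices + 1`. -/
noncomputable def genus : ℤ :=
  (Γ.edgeCount Finset.univ : ℤ) - Fintype.card Γ.V + 1 + ∑ v : Γ.V, (Γ.w v : ℤ)

/-- Membership in `𝒢_k(g,n)`: genus `g`, exactly `n` loose half edges, and at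
most `⌊k/2⌋ + 1` whole edges. -/
def memG (k g n : ℕ) : Prop :=
  Γ.genus = g ∧ Γ.looseCount = n ∧ Γ.edgeCount Finset.univ ≤ k / 2 + 1

/-- The full subgraph on `S` is `Φ`-weak if `g(S) ≤ Φ(v(Γ) − v(S))`. -/
def IsWeak (Φ : ℕ → ℝ) (S : Finset Γ.V) : Prop :=
  (Γ.subGenus S : ℝ) ≤ Φ (Fintype.card Γ.V - S.card)

open Classical in
/-- The vertex set of the maximal `Φ`-weak subgraph `Γ_W`: the union of the
vertex sets of all `Φ`-weak full subgraphs of `Γ`. -/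
noncomputable def weakCore (Φ : ℕ → ℝ) : Finset Γ.V :=
  Finset.univ.filter fun v => ∃ S : Finset Γ.V, Γ.IsWeak Φ S ∧ v ∈ S

end StableGraph

theorem aux_card_le {V : Type} [Finite V] (G : SimpleGraph V) :
    Nat.card V ≤ Nat.card G.edgeSet + Nat.card G.ConnectedComponent := by
  classical
  let r : V → V := fun v => (G.connectedComponentMk v).out
  have hr : ∀ v, G.Reachable v (r v) := fun v =>
    (SimpleGraph.ConnectedComponent.exact (Quot.out_eq (G.connectedComponentMk v))).symm
  have hrr : ∀ u v, G.Adj u v → r u = r v := fun u v h => by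
    have : G.connectedComponentMk u = G.connectedComponentMk v :=
      SimpleGraph.ConnectedComponent.sound h.reachable
    simp only [r, this]
  have key : ∀ v, v ≠ r v → ∃ u, G.Adj v u ∧ G.dist u (r v) < G.dist v (r v) := by
    intro v hv
    obtain ⟨p, hp⟩ := (hr v).exists_walk_length_eq_dist
    generalize r v = t at *
    cases p with
    | nil => exact absurd rfl hv
    | cons h q =>
      refine ⟨_, h, ?_⟩
      rw [← hp, SimpleGraph.Walk.length_cons]
      exact Nat.lt_succ_of_le (SimpleGraph.dist_le q)
  choose n hn hd using key
  let f : V → G.edgeSet ⊕ G.ConnectedComponent := fun v =>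
    if h : v = r v then Sum.inr (G.connectedComponentMk v)
    else Sum.inl ⟨s(v, n v h), hn v h⟩
  have hf : Function.Injective f := by
    intro u v huv
    by_cases hu : u = r u <;> by_cases hv : v = r v
    · simp only [f, dif_pos hu, dif_pos hv, Sum.inr.injEq] at huv
      rw [hu, hv]
      simp only [r, huv]
    · simp only [f, dif_pos hu, dif_neg hv] at huv
      cases huv
    · simp only [f, dif_neg hu, dif_pos hv] at huv
      cases huv
    · simp only [f, dif_neg hu, dif_neg hv, Sum.inl.injEq] at huv
      rcases Sym2.eq_iff.1 (congrArg Subtype.val huv) with h | h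
      · exact h.1
      · exfalso
        have h1 := hd u hu
        have h2 := hd v hv
        have h3 := hrr _ _ (hn u hu)
        rw [h.2] at h1 h3
        rw [← h.1, ← h3] at h2
        exact absurd h1 (by omega)
  rw [← Nat.card_sum]
  exact Nat.card_le_card_of_injective f hf

theorem aux_edge_le (Γ : StableGraph) (S : Finset Γ.V) :
    Nat.card (Γ.subGraphOn S).edgeSet ≤ Γ.edgeCount S := by
  classical
  have key : ∀ d : (Γ.subGraphOn S).Dart, ∃ x, Γ.ι x ≠ x ∧ Γ.a x = d.fst.1 ∧
      Γ.a (Γ.ι x) = d.snd.1 := by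
    intro d
    have h := d.adj
    simp only [StableGraph.subGraphOn, SimpleGraph.fromRel_adj] at h
    rcases h.2 with h | ⟨x, h1, h2, h3⟩
    · exact h
    · exact ⟨Γ.ι x, by rw [Γ.invol]; exact h1.symm, h3, by rw [Γ.invol]; exact h2⟩
  choose f h1 h2 h3 using key
  have hc : Fintype.card (Γ.subGraphOn S).Dart ≤ (Γ.edgeFinset S).card := by
    rw [← Finset.card_univ]
    apply Finset.card_le_card_of_injOn f
    · intro d _
      simp only [StableGraph.edgeFinset, Finset.coe_filter, Finset.mem_univ, true_and,
        Set.mem_setOf_eq, h2, h3]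
      exact ⟨h1 d, d.fst.2, d.snd.2⟩
    · intro d _ e _ h
      apply SimpleGraph.Dart.ext
      apply Prod.ext
      · apply Subtype.ext
        rw [← h2, ← h2, h]
      · apply Subtype.ext
        rw [← h3, ← h3, h]
  rw [SimpleGraph.dart_card_eq_twice_card_edges] at hc
  rw [Nat.card_eq_fintype_card, ← SimpleGraph.edgeFinset_card]
  unfold StableGraph.edgeCount
  omega

open StableGraph in
/-- If `Γ` is a stable graph with at most `m` whole edges and
`Δ₁`, `Δ₂` are full subgraphs of `Γ` on vertex sets `S₁`, `S₂`, then the full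
subgraph `Δ` on `S₁ ∪ S₂` satisfies `g(Δ) ≤ g(Δ₁) + g(Δ₂) + m`. -/
theorem subGenus_union_le (Γ : StableGraph) (m : ℕ)
    (hm : Γ.edgeCount Finset.univ ≤ m) (S₁ S₂ : Finset Γ.V) :
    Γ.subGenus (S₁ ∪ S₂) ≤ Γ.subGenus S₁ + Γ.subGenus S₂ + m := by
  have hb : ∀ S : Finset Γ.V, S.card ≤ Γ.edgeCount S + Γ.numComponents S := by
    intro S
    have h1 := aux_card_le (Γ.subGraphOn S)
    have h2 := aux_edge_le Γ S
    have h3 : Nat.card {v : Γ.V // v ∈ S} = S.card := by simp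
    unfold StableGraph.numComponents
    omega
  have hc : Γ.numComponents (S₁ ∪ S₂) ≤ (S₁ ∪ S₂).card := by
    have h3 : Nat.card {v : Γ.V // v ∈ S₁ ∪ S₂} = (S₁ ∪ S₂).card :=
      Nat.card_eq_card_toFinset _ |>.trans (by simp)
    rw [← h3]
    exact Nat.card_le_card_of_surjective (Γ.subGraphOn (S₁ ∪ S₂)).connectedComponentMk
      Quot.mk_surjective
  have he : Γ.edgeCount (S₁ ∪ S₂) ≤ Γ.edgeCount Finset.univ := by
    unfold StableGraph.edgeCount
    apply Nat.div_le_div_right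
    apply Finset.card_le_card
    intro x
    simp only [StableGraph.edgeFinset, Finset.mem_filter, Finset.mem_univ, true_and, and_true]
    exact fun h => h.1
  have hw : ∑ v ∈ S₁ ∪ S₂, (Γ.w v : ℤ) ≤ ∑ v ∈ S₁, (Γ.w v : ℤ) + ∑ v ∈ S₂, (Γ.w v : ℤ) := by
    rw [← Finset.sum_union_inter]
    have : 0 ≤ ∑ v ∈ S₁ ∩ S₂, (Γ.w v : ℤ) := Finset.sum_nonneg fun _ _ => by positivity
    linarith
  have b1 := hb S₁
  have b2 := hb S₂
  unfold StableGraph.subGenus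
  omega
end

section
/- Let k ≥ 0 be an integer and set l := ⌊k/2⌋ + 1, α := (2l+1)/l and β := l²·α^{l+1}, and define Φ_k : ℕ → ℝ by Φ_k(n) := α^{−n}·β. Then for every integer n with 1 ≤ n ≤ l + 1 one has 2·Φ_k(n) + l ≤ Φ_k(n−1). -/
/-- Let `k ≥ 0`, `l = ⌊k/2⌋ + 1`, `α = (2l+1)/l`,
`β = l²·α^(l+1)` and `Φ_k(n) = α^(−n)·β`.  Then for every `n` with
`1 ≤ n ≤ l + 1` one has `2·Φ_k(n) + l ≤ Φ_k(n−1)`. -/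
theorem phi_inequality (k l : ℕ) (hl : l = k / 2 + 1) (α β : ℝ)
    (hα : α = (2 * (l : ℝ) + 1) / l) (hβ : β = (l : ℝ) ^ 2 * α ^ (l + 1))
    (Φ : ℕ → ℝ) (hΦ : ∀ m : ℕ, Φ m = α ^ (-(m : ℤ)) * β) :
    ∀ m : ℕ, 1 ≤ m → m ≤ l + 1 → 2 * Φ m + (l : ℝ) ≤ Φ (m - 1) := by
  intro m h1 h2
  have hl0 : (0 : ℝ) < l := by
    have : 0 < l := by omega
    exact_mod_cast this
  have hαl : α * l = 2 * l + 1 := by rw [hα]; field_simp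
  have hα1 : 1 ≤ α := by
    rw [hα, le_div_iff₀ hl0]; linarith
  have hα0 : α ≠ 0 := by linarith
  have key : ∀ a b : ℕ, a + b = l + 1 → Φ a = (l : ℝ) ^ 2 * α ^ b := by
    intro a b hab
    rw [hΦ, hβ, ← hab, pow_add, zpow_neg, zpow_natCast]
    field_simp
  obtain ⟨j, hj⟩ := Nat.exists_eq_add_of_le h2
  rw [key m j hj.symm, key (m - 1) (j + 1) (by omega), pow_succ α j]
  have hp : 1 ≤ α ^ j := one_le_pow₀ hα1
  have e : (l : ℝ) ^ 2 * (α ^ j * α) = l * α ^ j * (α * l) := by ring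
  rw [e, hαl]
  nlinarith [mul_le_mul_of_nonneg_left hp hl0.le]
end

section
/- Let k ≥ 0, set l := ⌊k/2⌋ + 1, α := (2l+1)/l, β := l²·α^{l+1}, and define Φ_k : ℕ → ℝ≥0 by Φ_k(n) := α^{−n}·β. Let Γ ∈ 𝒢_k(g,n) and let Γ_W be its maximal Φ_k-weak subgraph. If k = 1 and P is a vertex of Γ of weight 0, or if k ≥ 2 and P is a vertex of Γ of weight at most k + 2, then P ∈ V(Γ_W). -/
theorem StableGraph.aux_count (Γ : StableGraph) (P : Γ.V) :
    (Γ.edgeFinset {P}).card + 2 * Fintype.card Γ.V ≤ (Γ.edgeFinset Finset.univ).card + 2 := by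
  classical
  set G := (SimpleGraph.fromRel fun u v : Γ.V =>
    ∃ x, Γ.ι x ≠ x ∧ Γ.a x = u ∧ Γ.a (Γ.ι x) = v) with hG
  have hc : G.Connected := Γ.conn
  have h1 := hc.card_vert_le_card_edgeSet_add_one
  have h2 := G.dart_card_eq_twice_card_edges
  have h3 : Nat.card G.edgeSet = G.edgeFinset.card := by
    rw [Nat.card_eq_fintype_card, SimpleGraph.edgeFinset_card]
  have key : ∀ d : G.Dart, ∃ x, Γ.ι x ≠ x ∧ Γ.a x = d.fst ∧ Γ.a (Γ.ι x) = d.snd := by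
    intro d
    have h := d.adj
    replace h := (SimpleGraph.fromRel_adj _ _ _).1 h
    rcases h.2 with h | ⟨x, hx, h4, h5⟩
    · exact h
    · refine ⟨Γ.ι x, ?_, h5, ?_⟩
      · rw [Γ.invol]; exact hx.symm
      · rw [Γ.invol]; exact h4
  choose f hf1 hf2 hf3 using key
  have hinj : Function.Injective f := by
    intro d e h
    apply SimpleGraph.Dart.ext
    apply Prod.ext
    · exact (hf2 d).symm.trans ((congrArg Γ.a h).trans (hf2 e))
    · exact (hf3 d).symm.trans ((congrArg (fun y => Γ.a (Γ.ι y)) h).trans (hf3 e))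
  have hdisj : Disjoint (Γ.edgeFinset {P}) (Finset.univ.image f) := by
    rw [Finset.disjoint_left]
    intro x hx hx2
    simp only [Finset.mem_image, Finset.mem_univ, true_and] at hx2
    obtain ⟨d, rfl⟩ := hx2
    simp only [StableGraph.edgeFinset, Finset.mem_filter, Finset.mem_singleton] at hx
    apply d.adj.ne
    rw [← hf2 d, ← hf3 d, hx.2.2.1, hx.2.2.2]
  have hsub : Γ.edgeFinset {P} ∪ Finset.univ.image f ⊆ Γ.edgeFinset Finset.univ := by
    intro x hx
    simp only [Finset.mem_union, Finset.mem_image, Finset.mem_univ, true_and,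
      StableGraph.edgeFinset, Finset.mem_filter, and_true] at hx ⊢
    rcases hx with hx | ⟨d, rfl⟩
    · exact hx.1
    · exact hf1 d
  have h4 := Finset.card_le_card hsub
  rw [Finset.card_union_of_disjoint hdisj, Finset.card_image_of_injective _ hinj,
    Finset.card_univ] at h4
  rw [Nat.card_eq_fintype_card] at h1
  omega

theorem StableGraph.aux_comp (Γ : StableGraph) (P : Γ.V) : Γ.numComponents {P} = 1 := by
  unfold StableGraph.numComponents
  rw [Nat.card_eq_one_iff_unique]
  refine ⟨⟨fun c d => ?_⟩, ⟨(Γ.subGraphOn {P}).connectedComponentMk ⟨P, by simp⟩⟩⟩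
  induction c using SimpleGraph.ConnectedComponent.ind with | _ u
  induction d using SimpleGraph.ConnectedComponent.ind with | _ v
  have : u = v := Subtype.ext
    ((Finset.mem_singleton.1 u.2).trans (Finset.mem_singleton.1 v.2).symm)
  rw [this]

open StableGraph in
/-- Let `k ≥ 0`, `l = ⌊k/2⌋ + 1`, `α = (2l+1)/l`,
`β = l²·α^(l+1)`, `Φ_k(n) = α^(−n)·β`, and let `Γ ∈ 𝒢_k(g,n)` with maximal
`Φ_k`-weak subgraph `Γ_W`.  If `k = 1` and `P` is a vertex of weight `0`, or
`k ≥ 2` and `P` is a vertex of weight at most `k + 2`, then `P ∈ V(Γ_W)`. -/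
theorem low_weight_vertex_in_weakCore (k g n l : ℕ) (hl : l = k / 2 + 1)
    (α β : ℝ) (hα : α = (2 * (l : ℝ) + 1) / l) (hβ : β = (l : ℝ) ^ 2 * α ^ (l + 1))
    (Φ : ℕ → ℝ) (hΦ : ∀ m : ℕ, Φ m = α ^ (-(m : ℤ)) * β)
    (Γ : StableGraph) (hΓ : Γ.memG k g n) (P : Γ.V)
    (hP : (k = 1 ∧ Γ.w P = 0) ∨ (2 ≤ k ∧ Γ.w P ≤ k + 2)) :
    P ∈ Γ.weakCore Φ := by
  have hcnt := Γ.aux_count P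
  have hE := hΓ.2.2
  have hV : 1 ≤ Fintype.card Γ.V := Fintype.card_pos_iff.2 ⟨P⟩
  have hw : Γ.w P ≤ 2 * l + 1 := by omega
  have hl1 : 1 ≤ l := by omega
  classical
  unfold StableGraph.weakCore
  simp only [Finset.mem_filter]
  refine ⟨Finset.mem_univ _, {P}, ?_, by simp⟩
  unfold StableGraph.IsWeak
  have hg : Γ.subGenus {P} = Γ.edgeCount {P} + Γ.w P := by
    unfold StableGraph.subGenus
    rw [Γ.aux_comp P]
    simp
  rw [hg, Finset.card_singleton, hΦ]
  unfold StableGraph.edgeCount at *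
  generalize hm : Fintype.card Γ.V - 1 = m
  obtain ⟨t, ht⟩ : ∃ t, l = m + t := ⟨l - m, by omega⟩
  have he : (Γ.edgeFinset {P}).card / 2 ≤ t := by omega
  generalize (Γ.edgeFinset {P}).card / 2 = e at *
  have hlR : (1 : ℝ) ≤ l := by exact_mod_cast hl1
  have hαl : (l : ℝ) * α = 2 * l + 1 := by rw [hα]; field_simp
  have hα2 : 2 ≤ α := by
    rw [hα, le_div_iff₀ (by linarith)]; linarith
  have hα0 : α ≠ 0 := by linarith
  have hval : α ^ (-(m : ℤ)) * β = (l : ℝ) ^ 2 * α * α ^ t := by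
    rw [hβ, show l + 1 = m + (t + 1) by omega, pow_add, zpow_neg, zpow_natCast]
    field_simp
    ring
  rw [hval]
  have hb : (1 : ℝ) + t ≤ α ^ t := by
    have h5 : ((t + 1 : ℕ) : ℝ) ≤ ((2 ^ t : ℕ) : ℝ) := by
      exact_mod_cast (Nat.lt_two_pow_self (n := t))
    have h6 : (2 : ℝ) ^ t ≤ α ^ t := pow_le_pow_left₀ (by norm_num) hα2 t
    push_cast at h5
    linarith
  have h7 : (2 * (l : ℝ) + 1) ≤ (l : ℝ) ^ 2 * α := by
    have : (l : ℝ) ^ 2 * α = l * (2 * l + 1) := by rw [← hαl]; ring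
    rw [this]; nlinarith
  have h8 : (2 * (l : ℝ) + 1) * (1 + t) ≤ (l : ℝ) ^ 2 * α * α ^ t :=
    mul_le_mul h7 hb (by positivity) (by linarith)
  have hwR : (Γ.w P : ℝ) ≤ 2 * l + 1 := by exact_mod_cast hw
  have heR : (e : ℝ) ≤ t := by exact_mod_cast he
  have ht0 : (0 : ℝ) ≤ t := by positivity
  push_cast
  nlinarith
end

section
/- For every integer l ≥ 1 and every integer n with 0 ≤ n ≤ l + 1 one has ((2l+3)/(l+1))^{l+1−n}·(l+1)² ≥ ((2l+1)/l)^{l−n}·l² (where for n = l + 1 the exponent l − n = −1 is interpreted as a negative power of the positive rational (2l+1)/l). -/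
/-- For every integer `l ≥ 1` and every integer `n` with
`0 ≤ n ≤ l + 1`, one has
`((2l+3)/(l+1))^(l+1−n)·(l+1)² ≥ ((2l+1)/l)^(l−n)·l²`, the powers being
integer powers (for `n = l + 1` the exponent `l − n = −1`). -/
theorem alpha_beta_monotone (l : ℕ) (hl : 1 ≤ l) :
    ∀ n : ℕ, n ≤ l + 1 →
      ((2 * (l : ℝ) + 3) / ((l : ℝ) + 1)) ^ ((l : ℤ) + 1 - (n : ℤ)) * ((l : ℝ) + 1) ^ 2 ≥
        ((2 * (l : ℝ) + 1) / (l : ℝ)) ^ ((l : ℤ) - (n : ℤ)) * (l : ℝ) ^ 2 := by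
  intro n hn
  obtain ⟨m, hm⟩ : ∃ m : ℕ, m + n = l + 1 := ⟨l + 1 - n, by omega⟩
  have hL : (1 : ℝ) ≤ (l : ℝ) := by exact_mod_cast hl
  have hmL : (m : ℝ) ≤ (l : ℝ) + 1 := by
    have : m ≤ l + 1 := by omega
    exact_mod_cast this
  have e1 : (l : ℤ) + 1 - (n : ℤ) = (m : ℤ) := by omega
  have e2 : (l : ℤ) - (n : ℤ) = (m : ℤ) - 1 := by omega
  rw [e1, e2]
  generalize (l : ℝ) = L at *
  have hL0 : 0 < L := by linarith
  have hb : 0 < (2 * L + 1) / L := by positivity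
  rw [zpow_sub_one₀ hb.ne', zpow_natCast, zpow_natCast]
  have ha : (2 * L + 3) / (L + 1) =
      (2 * L + 1) / L * (1 + -(1 / ((L + 1) * (2 * L + 1)))) := by
    field_simp
    ring
  have hx1 : 1 / ((L + 1) * (2 * L + 1)) ≤ 1 := by
    rw [div_le_one (by positivity)]
    nlinarith
  have hB := one_add_mul_le_pow (a := -(1 / ((L + 1) * (2 * L + 1)))) (by linarith) m
  have hB2 : 2 * ((2 * L + 1) / L)⁻¹ ≤ 1 + (m : ℝ) * -(1 / ((L + 1) * (2 * L + 1))) := by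
    have h1 : (m : ℝ) * (1 / ((L + 1) * (2 * L + 1))) ≤
        (L + 1) * (1 / ((L + 1) * (2 * L + 1))) := by gcongr
    have h2 : 2 * ((2 * L + 1) / L)⁻¹ = 1 - (L + 1) * (1 / ((L + 1) * (2 * L + 1))) := by
      field_simp
      ring
    linarith
  rw [ha, mul_pow, ge_iff_le, mul_assoc, mul_assoc]
  apply mul_le_mul_of_nonneg_left _ (by positivity)
  have hi : 0 < ((2 * L + 1) / L)⁻¹ := inv_pos.mpr hb
  apply mul_le_mul (by linarith) (by nlinarith) (by positivity) (by linarith)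
end

section
/- Let k ≥ 0, and for any m ≥ 0 set l_m := ⌊m/2⌋ + 1, α_m := (2l_m+1)/l_m, β_m := l_m²·α_m^{l_m+1}, and Φ_m(n) := α_m^{−n}·β_m. Let Γ ∈ 𝒢_k(g,n); since a graph with at most ⌊k/2⌋+1 whole edges has at most ⌊(k+1)/2⌋+1 whole edges, Γ may be regarded as an element i(Γ) of 𝒢_{k+1}(g,n). Then every Φ_k-weak full subgraph of Γ is Φ_{k+1}-weak; in particular, the maximal Φ_k-weak subgraph Γ_W of Γ is contained in the maximal Φ_{k+1}-weak subgraph of i(Γ), i.e. i(Γ_W) ⊆ (i(Γ))_W. -/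
theorem StableGraph.card_V_le (Γ : StableGraph) :
    Fintype.card Γ.V ≤ Γ.edgeCount Finset.univ + 1 := by
  classical
  set G := SimpleGraph.fromRel fun u v : Γ.V =>
    ∃ x, Γ.ι x ≠ x ∧ Γ.a x = u ∧ Γ.a (Γ.ι x) = v with hG
  have hc : G.Connected := Γ.conn
  have h1 := hc.card_vert_le_card_edgeSet_add_one
  have hd : ∀ d : G.Dart, ∃ x, Γ.ι x ≠ x ∧ Γ.a x = d.fst ∧ Γ.a (Γ.ι x) = d.snd := by
    intro d
    have h := (SimpleGraph.fromRel_adj _ _ _).1 d.adj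
    rcases h.2 with h | ⟨x, hx, h1, h2⟩
    · exact h
    · exact ⟨Γ.ι x, by rw [Γ.invol]; exact hx.symm, h2, by rw [Γ.invol]; exact h1⟩
  choose f hf using hd
  have h2 : Fintype.card G.Dart ≤ (Γ.edgeFinset Finset.univ).card := by
    rw [← Finset.card_univ]
    apply Finset.card_le_card_of_injOn f
    · intro d _
      simp [StableGraph.edgeFinset, (hf d).1]
    · intro d _ e _ hde
      apply SimpleGraph.Dart.ext
      apply Prod.ext
      · exact (hf d).2.1.symm.trans (by rw [hde]; exact (hf e).2.1)
      · exact (hf d).2.2.symm.trans (by rw [hde]; exact (hf e).2.2)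
  rw [SimpleGraph.dart_card_eq_twice_card_edges] at h2
  rw [Nat.card_eq_fintype_card, Nat.card_eq_fintype_card,
    ← SimpleGraph.edgeFinset_card] at h1
  unfold StableGraph.edgeCount
  omega

theorem phi_ineq (l j : ℕ) (hl : 1 ≤ l) (hj : j ≤ l + 1) :
    (l : ℝ) ^ 2 * ((2 * (l : ℝ) + 1) / l) ^ j ≤
      ((l : ℝ) + 1) ^ 2 * ((2 * ((l : ℝ) + 1) + 1) / ((l : ℝ) + 1)) ^ (j + 1) := by
  have hl' : (1 : ℝ) ≤ l := by exact_mod_cast hl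
  have hj' : (j : ℝ) ≤ l + 1 := by exact_mod_cast hj
  generalize (l : ℝ) = x at *
  have hx : 0 < x := by linarith
  set A := (2 * x + 1) / x with hA
  set B := (2 * (x + 1) + 1) / (x + 1) with hB
  have hA0 : 0 < A := by positivity
  have hB2 : 2 ≤ B := by rw [hB, le_div_iff₀ (by positivity)]; linarith
  set t := -(1 / ((x + 1) * (2 * x + 1))) with ht
  have hBA : B = A * (1 + t) := by rw [hA, hB, ht]; field_simp; ring
  have ht1 : -2 ≤ t := by
    rw [ht, neg_le_neg_iff, div_le_iff₀ (by positivity)]; nlinarith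
  have hb := one_add_mul_le_pow ht1 j
  have hh : (1 : ℝ) / 2 ≤ 1 + (j : ℝ) * t := by
    have : (j : ℝ) * (1 / ((x + 1) * (2 * x + 1))) ≤ 1 / 2 := by
      rw [mul_one_div, div_le_div_iff₀ (by positivity) (by positivity)]
      nlinarith
    rw [ht]; linarith
  have hp : A ^ j / 2 ≤ B ^ j := by
    rw [hBA, mul_pow]
    have : 0 < A ^ j := by positivity
    nlinarith
  have hAj : 0 < A ^ j := by positivity
  have h3 : A ^ j ≤ B ^ (j + 1) := by
    rw [pow_succ]; nlinarith
  calc x ^ 2 * A ^ j ≤ (x + 1) ^ 2 * A ^ j := by gcongr; linarith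
    _ ≤ _ := by gcongr

open StableGraph in
/-- For `m ≥ 0` set `l_m = ⌊m/2⌋ + 1`, `α_m = (2l_m+1)/l_m`,
`β_m = l_m²·α_m^(l_m+1)` and `Φ_m(n) = α_m^(−n)·β_m`.  Let `Γ ∈ 𝒢_k(g,n)`
(so that `Γ`, having at most `⌊k/2⌋+1 ≤ ⌊(k+1)/2⌋+1` whole edges, may also be
regarded as an element `i(Γ)` of `𝒢_{k+1}(g,n)`).  Then every `Φ_k`-weak full
subgraph of `Γ` is `Φ_{k+1}`-weak; in particular the maximal `Φ_k`-weak
subgraph of `Γ` is contained in the maximal `Φ_{k+1}`-weak subgraph: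
`i(Γ_W) ⊆ (i(Γ))_W`. -/
theorem weak_mono_in_k (k g n lk lk1 : ℕ)
    (hlk : lk = k / 2 + 1) (hlk1 : lk1 = (k + 1) / 2 + 1)
    (αk βk αk1 βk1 : ℝ)
    (hαk : αk = (2 * (lk : ℝ) + 1) / lk) (hβk : βk = (lk : ℝ) ^ 2 * αk ^ (lk + 1))
    (hαk1 : αk1 = (2 * (lk1 : ℝ) + 1) / lk1)
    (hβk1 : βk1 = (lk1 : ℝ) ^ 2 * αk1 ^ (lk1 + 1))
    (Φk Φk1 : ℕ → ℝ)
    (hΦk : ∀ m : ℕ, Φk m = αk ^ (-(m : ℤ)) * βk)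
    (hΦk1 : ∀ m : ℕ, Φk1 m = αk1 ^ (-(m : ℤ)) * βk1)
    (Γ : StableGraph) (hΓ : Γ.memG k g n) :
    Γ.memG (k + 1) g n ∧
    (∀ S : Finset Γ.V, Γ.IsWeak Φk S → Γ.IsWeak Φk1 S) ∧
    Γ.weakCore Φk ⊆ Γ.weakCore Φk1 := by
  have hmem : Γ.memG (k + 1) g n := ⟨hΓ.1, hΓ.2.1, by have := hΓ.2.2; omega⟩
  have hV : Fintype.card Γ.V ≤ lk + 1 := by
    have := Γ.card_V_le
    have := hΓ.2.2
    omega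
  have hΦ : ∀ m : ℕ, m ≤ lk + 1 → Φk m ≤ Φk1 m := by
    intro m hm
    have hcase : lk1 = lk ∨ lk1 = lk + 1 := by omega
    rcases hcase with h | h
    · subst h
      rw [hΦk, hΦk1, hβk, hβk1, hαk, hαk1]
    · have hl : 1 ≤ lk := by omega
      obtain ⟨j, hj⟩ := Nat.exists_eq_add_of_le hm
      have hα0 : αk ≠ 0 := by rw [hαk]; positivity
      have hα1 : αk1 ≠ 0 := by rw [hαk1, h]; positivity
      have e1 : Φk m = (lk : ℝ) ^ 2 * αk ^ j := by
        rw [hΦk, hβk, hj, pow_add, zpow_neg, zpow_natCast]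
        field_simp
      have e2 : Φk1 m = (lk1 : ℝ) ^ 2 * αk1 ^ (j + 1) := by
        rw [hΦk1, hβk1, show lk1 + 1 = m + (j + 1) by omega, pow_add, zpow_neg, zpow_natCast]
        field_simp
      rw [e1, e2, hαk, hαk1, h]
      push_cast
      exact phi_ineq lk j hl (by omega)
  have hw : ∀ S : Finset Γ.V, Γ.IsWeak Φk S → Γ.IsWeak Φk1 S := fun S hS =>
    le_trans hS (hΦ _ (by omega))
  refine ⟨hmem, hw, ?_⟩
  intro v hv
  simp only [StableGraph.weakCore, Finset.mem_filter, Finset.mem_univ, true_and] at hv ⊢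
  obtain ⟨S, hS, hvS⟩ := hv
  exact ⟨S, hw S hS, hvS⟩
end
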